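/- For every d ≥ 1 and every N-point configuration x_1, …, x_N on the unit sphere S^d ⊂ R^{d+1}, the normalized sum of distances never exceeds the distance integral: (1/N²) ∑_{j=1}^N ∑_{k=1}^N |x_j − x_k| ≤ ∫_{S^d} ∫_{S^d} |x − y| dσ_d(x) dσ_d(y). -/

import Mathlib

open MeasureTheory Metric Real Filter
open scoped BigOperators ENNReal NNReal RealInnerProductSpace Topology

noncomputable section

/-- Normalized uniform (surface) probability measure `σ_d` on the unit sphere
`S^d ⊂ ℝ^{d+1}`, defined as normalized `d`-dimensional Hausdorff measure. -/
def sigmaMeasure (d : ℕ) : Measure (EuclideanSpace ℝ (Fin (d + 1))) :=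
  (μH[(d : ℝ)] (sphere (0 : EuclideanSpace ℝ (Fin (d + 1))) 1))⁻¹ •
    μH[(d : ℝ)].restrict (sphere (0 : EuclideanSpace ℝ (Fin (d + 1))) 1)

/-- Squared spherical cap `L²` discrepancy of the `N`-point configuration `x` on `S^d`:
`∫_{-1}^{1} ∫_{S^d} |#{k : x_k ∈ C(y;t)}/N − σ_d(C(y;t))|² dσ_d(y) dt`. -/
def L2DiscSq (d N : ℕ) (x : Fin N → EuclideanSpace ℝ (Fin (d + 1))) : ℝ :=
  ∫ t in Set.Icc (-1 : ℝ) 1, ∫ y,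
    ((Nat.card {k : Fin N // t ≤ ⟪y, x k⟫} : ℝ) / N
      - (sigmaMeasure d {z | t ≤ ⟪y, z⟫}).toReal) ^ 2 ∂ sigmaMeasure d

/-- Spherical cap `L²` discrepancy. -/
def L2Disc (d N : ℕ) (x : Fin N → EuclideanSpace ℝ (Fin (d + 1))) : ℝ :=
  Real.sqrt (L2DiscSq d N x)

/-!
A half-space cut `x ↦ [⟪u, x⟫ ≤ t]` separates `x` from `y` for a set of pairs `(u, t)` whose
`σ ⊗ dt`-measure is a constant multiple of `‖x - y‖`, for every rotation invariant `σ` (a Crofton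
formula, as in Stolarsky's invariance principle). A single cut with masses `F = μ {⟪u, ·⟫ ≤ t}`
and `G = σ {⟪u, ·⟫ ≤ t}` satisfies `F (1 - F) + G (1 - G) ≤ F (1 - G) + G (1 - F)`, so integrating
over all cuts gives `I(μ, μ) + I(σ, σ) ≤ 2 I(μ, σ)` for the energy `I(μ, ν) = ∬ ‖x - y‖ dμ dν`.
On the unit sphere `∫ ‖x - y‖ dσ(y)` does not depend on `x`, hence `I(μ, σ) = I(σ, σ)` and
therefore `I(μ, μ) ≤ I(σ, σ)`.

All energies are taken in `ℝ≥0∞`, where Tonelli's theorem needs no integrability conditions.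
-/

open Module Submodule

section DistEnergy

variable {X : Type*} [PseudoEMetricSpace X] [MeasurableSpace X]

/-- The mutual energy `I(μ, ν) = ∬ d(x, y) dν(y) dμ(x)` of two measures for the distance kernel,
with values in `[0, ∞]`. -/
def distEnergy (μ ν : Measure X) : ℝ≥0∞ :=
  ∫⁻ x, ∫⁻ y, edist x y ∂ν ∂μ

lemma distEnergy_comm [OpensMeasurableSpace X] [SecondCountableTopology X]
    (μ ν : Measure X) [SFinite μ] [SFinite ν] : distEnergy μ ν = distEnergy ν μ := by
  rw [distEnergy, lintegral_lintegral_swap (by fun_prop)]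
  simp only [distEnergy, edist_comm]

lemma distEnergy_eq_of_ae_lintegral_edist_eq {μ ν : Measure X} [IsProbabilityMeasure μ] {c : ℝ≥0∞}
    (h : ∀ᵐ x ∂μ, ∫⁻ y, edist x y ∂ν = c) : distEnergy μ ν = c := by
  simp [distEnergy, lintegral_congr_ae h]

end DistEnergy

lemma integral_dist_prod_eq_toReal_distEnergy {X : Type*} [PseudoMetricSpace X]
    [MeasurableSpace X] [OpensMeasurableSpace X] [SecondCountableTopology X]
    (μ ν : Measure X) [SFinite ν] :
    ∫ p : X × X, dist p.1 p.2 ∂μ.prod ν = (distEnergy μ ν).toReal := by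
  rw [integral_eq_lintegral_of_nonneg_ae (.of_forall fun _ ↦ dist_nonneg) (by fun_prop)]
  simp only [← edist_dist]
  rw [lintegral_prod _ (by fun_prop), distEnergy]

lemma distEnergy_lt_top_of_ae_norm_eq_one {E : Type*} [SeminormedAddCommGroup E]
    [MeasurableSpace E] {μ ν : Measure E} [IsFiniteMeasure μ] [IsFiniteMeasure ν]
    (hμ : ∀ᵐ x ∂μ, ‖x‖ = 1) (hν : ∀ᵐ x ∂ν, ‖x‖ = 1) : distEnergy μ ν < ∞ := by
  have hle : distEnergy μ ν ≤ ∫⁻ _, ∫⁻ _, 2 ∂ν ∂μ := by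
    refine lintegral_mono_ae (hμ.mono fun x hx ↦ lintegral_mono_ae (hν.mono fun y hy ↦ ?_))
    rw [edist_dist]
    refine ENNReal.ofReal_le_of_le_toReal ?_
    calc dist x y ≤ ‖x‖ + ‖y‖ := dist_le_norm_add_norm x y
      _ = ENNReal.toReal 2 := by norm_num [hx, hy]
  refine hle.trans_lt ?_
  simp only [lintegral_const]
  finiteness

section EmpiricalMeasure

variable {ι X : Type*} [Fintype ι] [MeasurableSpace X]

/-- The empirical measure `(1/N) ∑ₖ δ_{xₖ}` of a finite family of `N` points. -/
def empiricalMeasure (x : ι → X) : Measure X :=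
  (Fintype.card ι : ℝ≥0∞)⁻¹ • ∑ k, Measure.dirac (x k)

instance isProbabilityMeasure_empiricalMeasure [Nonempty ι] (x : ι → X) :
    IsProbabilityMeasure (empiricalMeasure x) where
  measure_univ := by
    simp [empiricalMeasure, ENNReal.inv_mul_cancel, Fintype.card_ne_zero]

lemma ae_empiricalMeasure [MeasurableSingletonClass X] {x : ι → X} {p : X → Prop}
    (h : ∀ k, p (x k)) : ∀ᵐ y ∂empiricalMeasure x, p y := by
  refine Measure.ae_smul_measure ?_ _
  simpa only [ae_finsetSum_measure_iff, ae_dirac_eq, eventually_pure] using fun k _ ↦ h k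

lemma integral_dist_prod_empiricalMeasure {X : Type*} [MetricSpace X] [MeasurableSpace X]
    [OpensMeasurableSpace X] [SecondCountableTopology X] [Nonempty ι] (x : ι → X) :
    ∫ p : X × X, dist p.1 p.2 ∂(empiricalMeasure x).prod (empiricalMeasure x) =
      1 / (Fintype.card ι : ℝ) ^ 2 * ∑ j, ∑ k, dist (x j) (x k) := by
  have hsum : ∀ j, ∑ k, edist (x j) (x k) ≠ ∞ := fun j ↦ by
    simp [ENNReal.sum_eq_top, edist_ne_top]
  rw [integral_dist_prod_eq_toReal_distEnergy]
  simp only [distEnergy, empiricalMeasure, lintegral_smul_measure, lintegral_finsetSum_measure,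
    lintegral_dirac, smul_eq_mul, ← Finset.mul_sum, ENNReal.toReal_mul, ENNReal.toReal_inv,
    ENNReal.toReal_natCast, dist_edist,
    ENNReal.toReal_sum fun j _ ↦ hsum j, ENNReal.toReal_sum fun _ _ ↦ edist_ne_top _ _]
  ring

end EmpiricalMeasure

section Cuts

variable {X T : Type*} [MeasurableSpace X] [MeasurableSpace T]

lemma lintegral_lintegral_measure_cut (μ ν : Measure X) (τ : Measure T) [SFinite μ] [SFinite ν]
    [SFinite τ] {A : Set (X × T)} (hA : MeasurableSet A) :
    ∫⁻ x, ∫⁻ y, τ {t | (x, t) ∈ A ∧ (y, t) ∉ A} ∂ν ∂μ =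
      ∫⁻ t, μ {x | (x, t) ∈ A} * ν {y | (y, t) ∉ A} ∂τ := by
  have hS : MeasurableSet {q : (X × X) × T | (q.1.1, q.2) ∈ A ∧ (q.1.2, q.2) ∉ A} := by
    have h₁ : Measurable fun q : (X × X) × T ↦ (q.1.1, q.2) := by fun_prop
    have h₂ : Measurable fun q : (X × X) × T ↦ (q.1.2, q.2) := by fun_prop
    exact (h₁ hA).inter (h₂ hA).compl
  calc ∫⁻ x, ∫⁻ y, τ {t | (x, t) ∈ A ∧ (y, t) ∉ A} ∂ν ∂μ
      = ((μ.prod ν).prod τ) {q | (q.1.1, q.2) ∈ A ∧ (q.1.2, q.2) ∉ A} := by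
        rw [Measure.prod_apply hS,
          lintegral_prod _ (measurable_measure_prodMk_left hS).aemeasurable]
        rfl
    _ = ∫⁻ t, (μ.prod ν) ({x | (x, t) ∈ A} ×ˢ {y | (y, t) ∉ A}) ∂τ := by
        rw [Measure.prod_apply_symm hS]
        rfl
    _ = ∫⁻ t, μ {x | (x, t) ∈ A} * ν {y | (y, t) ∉ A} ∂τ := by
        simp only [Measure.prod_prod]

lemma measure_mul_measure_compl_add_le (μ ν : Measure X) [IsProbabilityMeasure μ]
    [IsProbabilityMeasure ν] {s : Set X} (hs : MeasurableSet s) :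
    μ s * μ sᶜ + ν s * ν sᶜ ≤ μ s * ν sᶜ + ν s * μ sᶜ := by
  simp only [← ofReal_measureReal (measure_ne_top _ _), probReal_compl_eq_one_sub hs]
  have hμ : 0 ≤ 1 - μ.real s := sub_nonneg.2 measureReal_le_one
  have hν : 0 ≤ 1 - ν.real s := sub_nonneg.2 measureReal_le_one
  rw [← ENNReal.ofReal_mul (by positivity), ← ENNReal.ofReal_mul (by positivity),
    ← ENNReal.ofReal_mul (by positivity), ← ENNReal.ofReal_mul (by positivity),
    ← ENNReal.ofReal_add (by positivity) (by positivity),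
    ← ENNReal.ofReal_add (by positivity) (by positivity)]
  refine ENNReal.ofReal_le_ofReal ?_
  linarith [sq_nonneg (μ.real s - ν.real s)]

lemma lintegral_measure_cut_add_le (μ ν : Measure X) (τ : Measure T) [IsProbabilityMeasure μ]
    [IsProbabilityMeasure ν] [SFinite τ] {A : Set (X × T)} (hA : MeasurableSet A) :
    ∫⁻ x, ∫⁻ y, τ {t | (x, t) ∈ A ∧ (y, t) ∉ A} ∂μ ∂μ +
        ∫⁻ x, ∫⁻ y, τ {t | (x, t) ∈ A ∧ (y, t) ∉ A} ∂ν ∂ν ≤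
      ∫⁻ x, ∫⁻ y, τ {t | (x, t) ∈ A ∧ (y, t) ∉ A} ∂ν ∂μ +
        ∫⁻ x, ∫⁻ y, τ {t | (x, t) ∈ A ∧ (y, t) ∉ A} ∂μ ∂ν := by
  have hmeas (ρ ρ' : Measure X) [SFinite ρ] [SFinite ρ'] :
      Measurable fun t ↦ ρ {x | (x, t) ∈ A} * ρ' {y | (y, t) ∉ A} :=
    (measurable_measure_prodMk_right hA).mul (measurable_measure_prodMk_right hA.compl)
  simp only [lintegral_lintegral_measure_cut _ _ τ hA]
  rw [← lintegral_add_left (hmeas μ μ), ← lintegral_add_left (hmeas μ ν)]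
  exact lintegral_mono fun t ↦ measure_mul_measure_compl_add_le μ ν (measurable_prodMk_right hA)

end Cuts

section OrthogonallyInvariant

variable {E : Type*} [NormedAddCommGroup E] [InnerProductSpace ℝ E] [MeasurableSpace E]

lemma lintegral_ofReal_inner_ne_top_of_ae_norm_eq_one {σ : Measure E} [IsFiniteMeasure σ]
    (hnorm : ∀ᵐ u ∂σ, ‖u‖ = 1) (v : E) :
    ∫⁻ u, .ofReal ⟪v, u⟫ ∂σ ≠ ∞ := by
  have hle : ∫⁻ u, .ofReal ⟪v, u⟫ ∂σ ≤ ∫⁻ _, ‖v‖ₑ ∂σ := by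
    refine lintegral_mono_ae (hnorm.mono fun u hu ↦ ?_)
    rw [← ofReal_norm]
    exact ENNReal.ofReal_le_ofReal (by simpa [hu] using real_inner_le_norm v u)
  refine ne_top_of_le_ne_top ?_ hle
  simp only [lintegral_const]
  finiteness

/-- A measure on a real inner product space is orthogonally invariant if every linear isometry of
the space onto itself preserves it. A probability measure carried by the unit sphere of a
finite-dimensional space is the uniform one if and only if it has this property. -/
def IsOrthogonallyInvariant (σ : Measure E) : Prop :=
  ∀ e : E ≃ₗᵢ[ℝ] E, MeasurePreserving e σ σ

namespace IsOrthogonallyInvariant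

variable [BorelSpace E] {σ : Measure E}

lemma lintegral_eq_of_norm_eq (hσ : IsOrthogonallyInvariant σ) {F : E → E → ℝ≥0∞}
    (hF : ∀ (e : E ≃ₗᵢ[ℝ] E) x z, F (e x) (e z) = F x z) {x y : E} (h : ‖x‖ = ‖y‖) :
    ∫⁻ z, F x z ∂σ = ∫⁻ z, F y z ∂σ := by
  set e := (ℝ ∙ (x - y))ᗮ.reflection
  have hexy : e x = y := reflection_sub h
  calc ∫⁻ z, F x z ∂σ = ∫⁻ z, F (e x) (e z) ∂σ := by simp only [hF]
    _ = ∫⁻ z, F y z ∂σ := by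
        rw [hexy]
        exact (hσ e).lintegral_comp_emb e.toHomeomorph.measurableEmbedding (F y)

lemma lintegral_edist_eq_of_norm_eq (hσ : IsOrthogonallyInvariant σ) {x y : E} (h : ‖x‖ = ‖y‖) :
    ∫⁻ z, edist x z ∂σ = ∫⁻ z, edist y z ∂σ :=
  hσ.lintegral_eq_of_norm_eq (fun e ↦ e.isometry.edist_eq) h

lemma lintegral_ofReal_inner (hσ : IsOrthogonallyInvariant σ) {e : E} (he : ‖e‖ = 1) (v : E) :
    ∫⁻ u, .ofReal ⟪v, u⟫ ∂σ = ‖v‖ₑ * ∫⁻ u, .ofReal ⟪e, u⟫ ∂σ := by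
  have hnorm : ‖v‖ = ‖‖v‖ • e‖ := by simp [norm_smul, he]
  rw [hσ.lintegral_eq_of_norm_eq (F := fun v u ↦ .ofReal ⟪v, u⟫)
    (fun e x z ↦ by rw [e.inner_map_map]) hnorm, ← lintegral_const_mul' _ _ enorm_ne_top]
  simp only [real_inner_smul_left, ENNReal.ofReal_mul (norm_nonneg v), ofReal_norm]

lemma lintegral_ofReal_inner_ne_zero [SecondCountableTopology E] [NeZero σ]
    (hσ : IsOrthogonallyInvariant σ) (hnorm : ∀ᵐ u ∂σ, ‖u‖ = 1) {e : E} (he : ‖e‖ = 1) :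
    ∫⁻ u, .ofReal ⟪e, u⟫ ∂σ ≠ 0 := by
  intro h
  have hnonpos (v : E) : ∀ᵐ u ∂σ, ⟪v, u⟫ ≤ 0 := by
    have hv : ∫⁻ u, .ofReal ⟪v, u⟫ ∂σ = 0 := by rw [hσ.lintegral_ofReal_inner he, h, mul_zero]
    simpa [EventuallyEq] using (lintegral_eq_zero_iff (by fun_prop)).1 hv
  have hzero : (fun u ↦ u) =ᵐ[σ] 0 := ae_eq_zero_of_forall_inner (𝕜 := ℝ) fun v ↦ by
    filter_upwards [hnonpos v, hnonpos (-v)] with u h₁ h₂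
    rw [inner_neg_left] at h₂
    exact le_antisymm h₁ (neg_nonpos.1 h₂)
  obtain ⟨u, hu₀, hu₁⟩ := (hzero.and hnorm).exists
  rw [show u = 0 from hu₀, norm_zero] at hu₁
  exact zero_ne_one hu₁

lemma prod_volume_cut_eq_mul_edist [SecondCountableTopology E]
    (hσ : IsOrthogonallyInvariant σ) {e : E} (he : ‖e‖ = 1) (x y : E) :
    (σ.prod volume) {p : E × ℝ | ⟪x, p.1⟫ ≤ p.2 ∧ ¬ ⟪y, p.1⟫ ≤ p.2} =
      (∫⁻ u, .ofReal ⟪e, u⟫ ∂σ) * edist x y := by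
  have hmeas : MeasurableSet {p : E × ℝ | ⟪x, p.1⟫ ≤ p.2 ∧ ¬ ⟪y, p.1⟫ ≤ p.2} := by
    measurability
  have hslice (u : E) : Prod.mk u ⁻¹' {p : E × ℝ | ⟪x, p.1⟫ ≤ p.2 ∧ ¬ ⟪y, p.1⟫ ≤ p.2} =
      Set.Ico ⟪x, u⟫ ⟪y, u⟫ := by
    ext t
    simp
  rw [Measure.prod_apply hmeas]
  simp only [hslice, Real.volume_Ico, ← inner_sub_left]
  rw [hσ.lintegral_ofReal_inner he, ← edist_eq_enorm_sub, edist_comm, mul_comm]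

lemma distEnergy_add_distEnergy_le [SecondCountableTopology E] [IsFiniteMeasure σ] [NeZero σ]
    (hσ : IsOrthogonallyInvariant σ) (hnorm : ∀ᵐ u ∂σ, ‖u‖ = 1)
    (μ ν : Measure E) [IsProbabilityMeasure μ] [IsProbabilityMeasure ν] :
    distEnergy μ μ + distEnergy ν ν ≤ distEnergy μ ν + distEnergy ν μ := by
  obtain ⟨e, he⟩ := hnorm.exists
  have hC₀ := hσ.lintegral_ofReal_inner_ne_zero hnorm he
  have hC := lintegral_ofReal_inner_ne_top_of_ae_norm_eq_one hnorm e
  have hA : MeasurableSet {q : E × (E × ℝ) | ⟪q.1, q.2.1⟫ ≤ q.2.2} :=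
    measurableSet_le (by fun_prop) (by fun_prop)
  have hcut := lintegral_measure_cut_add_le μ ν (σ.prod volume) hA
  simp only [Set.mem_ofPred_eq, hσ.prod_volume_cut_eq_mul_edist he,
    lintegral_const_mul' _ _ hC] at hcut
  rwa [← mul_add, ← mul_add, ENNReal.mul_le_mul_iff_right hC₀ hC] at hcut

lemma distEnergy_eq_distEnergy_self [IsProbabilityMeasure σ] (hσ : IsOrthogonallyInvariant σ)
    (hσ₁ : ∀ᵐ x ∂σ, ‖x‖ = 1) {μ : Measure E} [IsProbabilityMeasure μ]
    (hμ₁ : ∀ᵐ x ∂μ, ‖x‖ = 1) : distEnergy μ σ = distEnergy σ σ := by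
  obtain ⟨e, he⟩ := hσ₁.exists
  have hpotential {x : E} (hx : ‖x‖ = 1) : ∫⁻ y, edist x y ∂σ = ∫⁻ y, edist e y ∂σ :=
    hσ.lintegral_edist_eq_of_norm_eq (hx.trans he.symm)
  rw [distEnergy_eq_of_ae_lintegral_edist_eq (hμ₁.mono fun _ ↦ hpotential),
    distEnergy_eq_of_ae_lintegral_edist_eq (hσ₁.mono fun _ ↦ hpotential)]

theorem distEnergy_self_le [SecondCountableTopology E] [IsProbabilityMeasure σ]
    (hσ : IsOrthogonallyInvariant σ) (hσ₁ : ∀ᵐ x ∂σ, ‖x‖ = 1) {μ : Measure E}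
    [IsProbabilityMeasure μ] (hμ₁ : ∀ᵐ x ∂μ, ‖x‖ = 1) : distEnergy μ μ ≤ distEnergy σ σ := by
  have hle := hσ.distEnergy_add_distEnergy_le hσ₁ μ σ
  rw [distEnergy_comm σ μ, hσ.distEnergy_eq_distEnergy_self hσ₁ hμ₁] at hle
  exact (ENNReal.add_le_add_iff_right (distEnergy_lt_top_of_ae_norm_eq_one hσ₁ hσ₁).ne).1 hle

end IsOrthogonallyInvariant

end OrthogonallyInvariant

section HausdorffMeasureSphere

lemma hausdorffMeasure_image_lt_top_of_locallyLipschitz {F X : Type*} [NormedAddCommGroup F]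
    [NormedSpace ℝ F] [FiniteDimensional ℝ F] [MeasurableSpace F] [BorelSpace F] [MetricSpace X]
    [MeasurableSpace X] [BorelSpace X] {f : F → X} (hf : LocallyLipschitz f) {K : Set F}
    (hK : IsCompact K) : μH[finrank ℝ F] (f '' K) < ∞ := by
  obtain ⟨C, hC⟩ := hf.locallyLipschitzOn.exists_lipschitzOnWith_of_compact hK
  refine (hC.hausdorffMeasure_image_le (Nat.cast_nonneg _)).trans_lt (ENNReal.mul_lt_top ?_ ?_)
  · exact ENNReal.rpow_lt_top_of_nonneg (Nat.cast_nonneg _) ENNReal.coe_ne_top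
  · exact hK.measure_lt_top

variable {E : Type*} [NormedAddCommGroup E] [InnerProductSpace ℝ E]

lemma ball_subset_orthogonalProjectionOnto_image_unitSphere {v : E} (hv : ‖v‖ = 1) :
    ball (0 : (ℝ ∙ v)ᗮ) 1 ⊆ (ℝ ∙ v)ᗮ.orthogonalProjectionOnto '' sphere (0 : E) 1 := by
  intro w hw
  have hwv : ⟪(w : E), v⟫ = 0 := mem_orthogonal_singleton_iff_inner_left.1 w.2
  have hw₁ : ‖w‖ ^ 2 ≤ 1 := pow_le_one₀ (norm_nonneg w) (mem_ball_zero_iff.1 hw).le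
  refine ⟨w + √(1 - ‖w‖ ^ 2) • v, ?_, ?_⟩
  · rw [mem_sphere_zero_iff_norm, ← sq_eq_sq₀ (norm_nonneg _) zero_le_one, norm_add_sq_real,
      inner_smul_right, hwv, norm_smul, hv, norm_of_nonneg (sqrt_nonneg _), mul_one,
      sq_sqrt (sub_nonneg.2 hw₁)]
    simp
  · simp

variable [MeasurableSpace E] [BorelSpace E] {n : ℕ} [Fact (finrank ℝ E = n + 1)]

-- The hemisphere is the image of a compact set under the smooth inverse stereographic projection.
lemma hausdorffMeasure_hemisphere_lt_top {v : E} (hv : ‖v‖ = 1) :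
    μH[n] (sphere (0 : E) 1 ∩ {x | ⟪v, x⟫ ≤ 0}) < ∞ := by
  have : FiniteDimensional ℝ E := .of_fact_finrank_eq_succ n
  have hdim : finrank ℝ (ℝ ∙ v)ᗮ = n :=
    finrank_orthogonal_span_singleton (ne_zero_of_norm_ne_zero (hv ▸ one_ne_zero))
  set S := sphere (0 : E) 1 ∩ {x | ⟪v, x⟫ ≤ 0}
  have hS : IsCompact S :=
    (isCompact_sphere 0 1).inter_right (isClosed_le (by fun_prop) continuous_const)
  have hpole : ∀ x ∈ S, innerSL ℝ v x ≠ 1 := fun x hx ↦ by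
    have hx₀ : ⟪v, x⟫ ≤ 0 := hx.2
    exact (hx₀.trans_lt one_pos).ne
  have hK : IsCompact (stereoToFun v '' S) := hS.image_of_continuousOn
    (continuousOn_stereoToFun.mono hpole)
  have hLip : LocallyLipschitz fun w : (ℝ ∙ v)ᗮ ↦ stereoInvFunAux v w :=
    (contDiff_stereoInvFunAux.comp (ℝ ∙ v)ᗮ.subtypeL.contDiff).locallyLipschitz
  refine (measure_mono ?_).trans_lt
    (hdim ▸ hausdorffMeasure_image_lt_top_of_locallyLipschitz hLip hK)
  intro x hx
  have hxv : x ≠ v := by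
    rintro rfl
    exact hpole x hx (by simp [hv])
  refine ⟨_, Set.mem_image_of_mem _ hx, ?_⟩
  exact congrArg Subtype.val (stereo_left_inv hv (x := ⟨x, hx.1⟩) hxv)

lemma hausdorffMeasure_unitSphere_lt_top : μH[n] (sphere (0 : E) 1) < ∞ := by
  have : Nontrivial E := nontrivial_of_finrank_eq_succ (Fact.out : finrank ℝ E = n + 1)
  obtain ⟨v, hv⟩ := exists_norm_eq E zero_le_one
  have hcover : sphere (0 : E) 1 ⊆
      sphere 0 1 ∩ {x | ⟪v, x⟫ ≤ 0} ∪ sphere 0 1 ∩ {x | ⟪-v, x⟫ ≤ 0} := by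
    intro x hx
    rcases le_total ⟪v, x⟫ 0 with h | h
    · exact .inl ⟨hx, h⟩
    · exact .inr ⟨hx, by simpa using h⟩
  exact (measure_mono hcover).trans_lt <| measure_union_lt_top
    (hausdorffMeasure_hemisphere_lt_top hv) (hausdorffMeasure_hemisphere_lt_top (by simpa))

lemma hausdorffMeasure_unitSphere_ne_zero : μH[n] (sphere (0 : E) 1) ≠ 0 := by
  have : FiniteDimensional ℝ E := .of_fact_finrank_eq_succ n
  have : Nontrivial E := nontrivial_of_finrank_eq_succ (Fact.out : finrank ℝ E = n + 1)
  obtain ⟨v, hv⟩ := exists_norm_eq E zero_le_one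
  have hdim : finrank ℝ (ℝ ∙ v)ᗮ = n :=
    finrank_orthogonal_span_singleton (ne_zero_of_norm_ne_zero (hv ▸ one_ne_zero))
  have hLip : LipschitzWith 1 (ℝ ∙ v)ᗮ.orthogonalProjectionOnto :=
    lipschitzWith_orthogonalProjectionOnto _
  have hball : 0 < μH[n] (ball (0 : (ℝ ∙ v)ᗮ) 1) := by
    rw [← hdim]
    exact measure_ball_pos _ _ one_pos
  refine (hball.trans_le ?_).ne'
  calc μH[n] (ball (0 : (ℝ ∙ v)ᗮ) 1)
      ≤ μH[n] ((ℝ ∙ v)ᗮ.orthogonalProjectionOnto '' sphere (0 : E) 1) :=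
        measure_mono (ball_subset_orthogonalProjectionOnto_image_unitSphere hv)
    _ ≤ μH[n] (sphere (0 : E) 1) := by
        simpa using hLip.hausdorffMeasure_image_le (Nat.cast_nonneg n) (sphere (0 : E) 1)

end HausdorffMeasureSphere

section SigmaMeasure

variable (d : ℕ)

instance isProbabilityMeasure_sigmaMeasure : IsProbabilityMeasure (sigmaMeasure d) where
  measure_univ := by
    have : Fact (finrank ℝ (EuclideanSpace ℝ (Fin (d + 1))) = d + 1) := ⟨by simp⟩
    simp only [sigmaMeasure, Measure.smul_apply, Measure.restrict_apply_univ, smul_eq_mul]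
    exact ENNReal.inv_mul_cancel hausdorffMeasure_unitSphere_ne_zero
      hausdorffMeasure_unitSphere_lt_top.ne

lemma ae_norm_eq_one_sigmaMeasure : ∀ᵐ x ∂sigmaMeasure d, ‖x‖ = 1 := by
  refine Measure.ae_smul_measure ?_ _
  filter_upwards [ae_restrict_mem isClosed_sphere.measurableSet] with x hx
  exact mem_sphere_zero_iff_norm.1 hx

lemma isOrthogonallyInvariant_sigmaMeasure : IsOrthogonallyInvariant (sigmaMeasure d) := by
  intro e
  have hsphere : e.toIsometryEquiv ⁻¹' sphere 0 1 = sphere 0 1 := by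
    ext x
    simp
  have hrestrict := (e.toIsometryEquiv.measurePreserving_hausdorffMeasure (d : ℝ)).restrict_preimage
    (s := sphere 0 1) isClosed_sphere.measurableSet
  rw [hsphere] at hrestrict
  exact hrestrict.smul_measure _

end SigmaMeasure

theorem normalized_sum_of_distances_le_distance_integral_general {E : Type*}
    [NormedAddCommGroup E] [InnerProductSpace ℝ E] [MeasurableSpace E] [BorelSpace E]
    [SecondCountableTopology E] {σ μ : Measure E} [IsProbabilityMeasure σ] [IsProbabilityMeasure μ]
    (hσ : IsOrthogonallyInvariant σ) (hσ₁ : ∀ᵐ x ∂σ, ‖x‖ = 1) (hμ₁ : ∀ᵐ x ∂μ, ‖x‖ = 1) :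
    ∫ p : E × E, dist p.1 p.2 ∂μ.prod μ ≤ ∫ p : E × E, dist p.1 p.2 ∂σ.prod σ := by
  simp only [integral_dist_prod_eq_toReal_distEnergy]
  exact ENNReal.toReal_mono (distEnergy_lt_top_of_ae_norm_eq_one hσ₁ hσ₁).ne
    (hσ.distEnergy_self_le hσ₁ hμ₁)

/-- For every `d ≥ 1` and every `N`-point configuration on the unit sphere `S^d ⊂ ℝ^{d+1}`,
the normalized sum of distances never exceeds the distance integral. -/
theorem normalized_sum_of_distances_le_distance_integral (d : ℕ) (hd : 1 ≤ d) (N : ℕ)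
    (hN : 0 < N) (x : Fin N → EuclideanSpace ℝ (Fin (d + 1)))
    (hx : ∀ k, x k ∈ sphere (0 : EuclideanSpace ℝ (Fin (d + 1))) 1) :
    (1 / (N : ℝ) ^ 2) * ∑ j, ∑ k, dist (x j) (x k)
      ≤ ∫ p : EuclideanSpace ℝ (Fin (d + 1)) × EuclideanSpace ℝ (Fin (d + 1)),
          dist p.1 p.2 ∂ (sigmaMeasure d).prod (sigmaMeasure d) := by
  have : NeZero N := ⟨hN.ne'⟩
  simpa [integral_dist_prod_empiricalMeasure] using
    normalized_sum_of_distances_le_distance_integral_general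
      (isOrthogonallyInvariant_sigmaMeasure d) (ae_norm_eq_one_sigmaMeasure d)
      (ae_empiricalMeasure fun k ↦ mem_sphere_zero_iff_norm.1 (hx k))
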